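/- (Switching off t-body Hamiltonians with orthogonal arrays.) Let M = (g_{kj}) be an n×N array with entries in Z_d × Z_d that is an orthogonal array of strength t and multiplicity λ, and let W_j = ⊗_{k∈Fin n} U_{g_{kj}}. Let H = ∑_{κ ∈ F} X_κ^{(κ)} be a t-body Hamiltonian, where F is a finite family of injective maps κ : Fin t → Fin n and each X_κ is a traceless d^t×d^t matrix. Then (1/N) ∑_{j=1}^{N} W_j^* H W_j = 0. -/

import Mathlib

/-!
The matrix `U_g`, `g = (a, b)`, is monomial: `U_g |l⟩ = ω^(b l) |l - a⟩` (`Umat_apply`). Hence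
conjugating by `W = ⊗ U_{g_k}` only multiplies matrix entries by phases and translates their
indices (`conj_tensorProd_apply`). For an embedded operator `X^{(κ)}` an entry `(x, y)` vanishes
unless `x` and `y` agree outside the range of `κ`, and then the phases outside the range cancel,
so the entry of `W^* X^{(κ)} W` depends only on the rows of the array selected by `κ`
(`conj_embed_apply`).

The orthogonal array therefore turns the sum over its columns into `λ` times a sum over all
tuples in `(Z_d × Z_d)^t` (`sum_columns`; strictly increasing row selections are enough because
an injective `κ` can be sorted). In that full sum, the clock labels `b` contribute a product of
geometric sums of roots of unity, which is zero unless `x` and `y` agree on the range of `κ`; in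
that case the shift labels `a` run over all diagonal entries of `X`, and the total is a multiple
of the trace (`sum_twirlEntry`).
-/

open scoped BigOperators Matrix Classical

/-- The cyclic-shift matrix `S = ∑_k |k⟩⟨k+1 mod d|`. -/
noncomputable def shiftMat (d : ℕ) : Matrix (Fin d) (Fin d) ℂ :=
  Matrix.of fun k l => if (l : ℕ) = ((k : ℕ) + 1) % d then 1 else 0

/-- The clock matrix `T = ∑_k ω^k |k⟩⟨k|` with `ω = exp(2πi/d)`. -/
noncomputable def clockMat (d : ℕ) : Matrix (Fin d) (Fin d) ℂ :=
  Matrix.of fun k l =>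
    if k = l then Complex.exp (2 * Real.pi * Complex.I / d) ^ (k : ℕ) else 0

/-- `U_g = S^a T^b` for `g = (a, b) ∈ Z_d × Z_d`. -/
noncomputable def Umat (d : ℕ) (g : ZMod d × ZMod d) : Matrix (Fin d) (Fin d) ℂ :=
  shiftMat d ^ g.1.val * clockMat d ^ g.2.val

/-- Tensor product `⊗V` of a family of `d × d` matrices, with rows and columns
indexed by functions `Fin n → Fin d`. -/
noncomputable def tensorProd {n d : ℕ} (V : Fin n → Matrix (Fin d) (Fin d) ℂ) :
    Matrix (Fin n → Fin d) (Fin n → Fin d) ℂ :=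
  Matrix.of fun x y => ∏ i, V i (x i) (y i)

/-- The embedding `X^{(κ)}` of a `d^t × d^t` matrix `X` into the `n`-fold tensor
product, acting on the qudits selected by `κ` and trivially elsewhere. -/
noncomputable def embed {t n d : ℕ} (κ : Fin t → Fin n)
    (X : Matrix (Fin t → Fin d) (Fin t → Fin d) ℂ) :
    Matrix (Fin n → Fin d) (Fin n → Fin d) ℂ :=
  Matrix.of fun x y =>
    if ∀ i : Fin n, i ∉ Set.range κ → x i = y i then X (x ∘ κ) (y ∘ κ) else 0

/-- The primitive `d`-th root of unity `ω = exp(2πi/d)`. -/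
noncomputable def rootU (d : ℕ) : ℂ := Complex.exp (2 * Real.pi * Complex.I / d)

lemma rootU_prim (d : ℕ) [NeZero d] : IsPrimitiveRoot (rootU d) d :=
  Complex.isPrimitiveRoot_exp d (NeZero.ne d)

lemma star_rootU_mul (d : ℕ) [NeZero d] (k : ℕ) :
    star (rootU d ^ k) * rootU d ^ k = 1 := by
  have h : ‖rootU d‖ = 1 := (rootU_prim d).norm'_eq_one (NeZero.ne d)
  rw [Complex.star_def, Complex.conj_mul', norm_pow, h]
  simp

/-- The identification of `Z_d` with the index set `Fin d`, by canonical representatives. -/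
def zmodFin (d : ℕ) [NeZero d] : ZMod d ≃ Fin d where
  toFun a := ⟨a.val, ZMod.val_lt a⟩
  invFun k := ((k : ℕ) : ZMod d)
  left_inv a := ZMod.natCast_zmod_val a
  right_inv k := Fin.ext (ZMod.val_cast_of_lt k.isLt)

lemma shiftMat_pow_apply (d : ℕ) [NeZero d] (a : ℕ) (k l : Fin d) :
    (shiftMat d ^ a) k l = if (l : ℕ) = ((k : ℕ) + a) % d then 1 else 0 := by
  induction a generalizing k with
  | zero =>
    simp [Matrix.one_apply, Nat.mod_eq_of_lt k.isLt, Fin.ext_iff, eq_comm]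
  | succ a ih =>
    have hpos : 0 < d := NeZero.pos d
    rw [pow_succ', Matrix.mul_apply,
      Finset.sum_eq_single (⟨((k : ℕ) + 1) % d, Nat.mod_lt _ hpos⟩ : Fin d)]
    · rw [ih]
      simp [shiftMat, Nat.add_comm a 1, Nat.add_assoc]
    · intro m _ hm
      have : ¬ (m : ℕ) = ((k : ℕ) + 1) % d := fun h => hm (Fin.ext h)
      simp [shiftMat, this]
    · simp

/-- `U_{(a,b)}` is a monomial matrix: column `l` has the single entry `ω^(b l)`, in row `l - a`. -/
lemma Umat_apply (d : ℕ) [NeZero d] (g : ZMod d × ZMod d) (k l : Fin d) :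
    Umat d g k l =
      if k = l - zmodFin d g.1 then rootU d ^ ((l : ℕ) * g.2.val) else 0 := by
  have hT : clockMat d = Matrix.diagonal (fun k : Fin d => rootU d ^ (k : ℕ)) := by
    ext i j
    simp [clockMat, Matrix.diagonal_apply, rootU]
  have hiff : (l : ℕ) = ((k : ℕ) + g.1.val) % d ↔ k = l - zmodFin d g.1 := by
    rw [eq_sub_iff_add_eq, eq_comm, Fin.ext_iff, Fin.val_add]
    rfl
  rw [Umat, hT, Matrix.diagonal_pow, Matrix.mul_diagonal, shiftMat_pow_apply]
  simp only [hiff, Pi.pow_apply, ← pow_mul, ite_mul, one_mul, zero_mul]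

lemma tensorProd_Umat_apply {n d : ℕ} [NeZero d] (g : Fin n → ZMod d × ZMod d)
    (u x : Fin n → Fin d) :
    tensorProd (fun k => Umat d (g k)) u x =
      if u = (fun i => x i - zmodFin d (g i).1) then
        ∏ i, rootU d ^ ((x i : ℕ) * (g i).2.val) else 0 := by
  simp only [tensorProd, Matrix.of_apply, Umat_apply, Finset.prod_ite_zero, funext_iff,
    Finset.mem_univ, true_imp_iff]

/-- Conjugation by `⊗ U_{g_k}` multiplies entries by phases and translates their indices. -/
lemma conj_tensorProd_apply {n d : ℕ} [NeZero d] (g : Fin n → ZMod d × ZMod d)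
    (A : Matrix (Fin n → Fin d) (Fin n → Fin d) ℂ) (x y : Fin n → Fin d) :
    ((tensorProd (fun k => Umat d (g k)))ᴴ * A * tensorProd (fun k => Umat d (g k))) x y =
      (∏ i, star (rootU d ^ ((x i : ℕ) * (g i).2.val)) * rootU d ^ ((y i : ℕ) * (g i).2.val)) *
        A (fun i => x i - zmodFin d (g i).1) (fun i => y i - zmodFin d (g i).1) := by
  simp only [Matrix.mul_apply, Matrix.conjTranspose_apply, tensorProd_Umat_apply, mul_ite,
    mul_zero, Finset.sum_ite_eq', Finset.mem_univ, if_true, apply_ite star,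
    star_zero, ite_mul, zero_mul, Finset.prod_mul_distrib, star_prod]
  ring

/-- The entry `(x, y)` of `X` conjugated by `⊗ U_{h_s}` on `t` qudits. -/
noncomputable def twirlEntry {t d : ℕ} [NeZero d] (X : Matrix (Fin t → Fin d) (Fin t → Fin d) ℂ)
    (x y : Fin t → Fin d) (h : Fin t → ZMod d × ZMod d) : ℂ :=
  (∏ s, star (rootU d ^ ((x s : ℕ) * (h s).2.val)) * rootU d ^ ((y s : ℕ) * (h s).2.val)) *
    X (fun s => x s - zmodFin d (h s).1) (fun s => y s - zmodFin d (h s).1)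

/-- Conjugating an embedded operator involves only the tensor factors on which it acts. -/
lemma conj_embed_apply {t n d : ℕ} [NeZero d] (κ : Fin t → Fin n) (hκ : Function.Injective κ)
    (X : Matrix (Fin t → Fin d) (Fin t → Fin d) ℂ) (g : Fin n → ZMod d × ZMod d)
    (x y : Fin n → Fin d) :
    ((tensorProd (fun k => Umat d (g k)))ᴴ * embed κ X *
        tensorProd (fun k => Umat d (g k))) x y =
      if ∀ i : Fin n, i ∉ Set.range κ → x i = y i then
        twirlEntry X (x ∘ κ) (y ∘ κ) (g ∘ κ) else 0 := by
  rw [conj_tensorProd_apply]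
  simp only [embed, Matrix.of_apply, sub_left_inj]
  by_cases hxy : ∀ i : Fin n, i ∉ Set.range κ → x i = y i
  · rw [if_pos hxy, if_pos hxy, twirlEntry]
    congr 1
    symm
    refine Fintype.prod_of_injective κ hκ _ _ (fun i hi => ?_) (fun s => rfl)
    rw [hxy i hi, star_rootU_mul]
  · rw [if_neg hxy, if_neg hxy, mul_zero]

/-- Orthogonality of the characters of `Z_d`, in the off-diagonal case. -/
lemma sum_phase_eq_zero (d : ℕ) [NeZero d] {k l : Fin d} (hkl : k ≠ l) :
    ∑ b : ZMod d, star (rootU d ^ ((k : ℕ) * b.val)) * rootU d ^ ((l : ℕ) * b.val) = 0 := by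
  have hω := rootU_prim d
  set ζ : ℂ := star (rootU d ^ (k : ℕ)) * rootU d ^ (l : ℕ) with hζ
  have hne : ζ ≠ 1 := by
    intro h
    -- Multiplying `ζ = 1` by `ω^k` gives `ω^l = ω^k`.
    have h2 : rootU d ^ (l : ℕ) = rootU d ^ (k : ℕ) := by
      linear_combination rootU d ^ (k : ℕ) * h - rootU d ^ (l : ℕ) * star_rootU_mul d k
    exact hkl (Fin.ext (hω.pow_inj k.isLt l.isLt h2.symm))
  have hpow : ζ ^ d = 1 := by
    rw [hζ, mul_pow, ← star_pow, pow_right_comm, pow_right_comm _ (l : ℕ), hω.pow_eq_one]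
    simp
  have hsum : ∑ b : ZMod d, star (rootU d ^ ((k : ℕ) * b.val)) * rootU d ^ ((l : ℕ) * b.val) =
      ∑ m : Fin d, ζ ^ (m : ℕ) := by
    refine Fintype.sum_equiv (zmodFin d) _ _ (fun b => ?_)
    change _ = ζ ^ b.val
    rw [hζ, mul_pow, ← star_pow, ← pow_mul, ← pow_mul]
  rw [hsum, Fin.sum_univ_eq_sum_range (fun m => ζ ^ m) d, geom_sum_eq hne, hpow]
  simp

/-- Conjugating by all `⊗ U_{h_s}` and summing annihilates traceless operators. -/
lemma sum_twirlEntry {t d : ℕ} [NeZero d] (X : Matrix (Fin t → Fin d) (Fin t → Fin d) ℂ)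
    (hX : X.trace = 0) (x y : Fin t → Fin d) :
    ∑ h : Fin t → ZMod d × ZMod d, twirlEntry X x y h = 0 := by
  rw [← (Equiv.arrowProdEquivProdArrow (Fin t) (fun _ => ZMod d) (fun _ => ZMod d)).symm.sum_comp,
    Fintype.sum_prod_type_right]
  simp only [twirlEntry, Equiv.arrowProdEquivProdArrow, Equiv.coe_fn_symm_mk]
  by_cases hxy : x = y
  · subst hxy
    refine Finset.sum_eq_zero (fun b _ => ?_)
    rw [← Finset.mul_sum]
    -- As the shift labels vary, `x - a` runs over all indices exactly once.
    have htr : ∑ a : Fin t → ZMod d,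
        X (fun s => x s - zmodFin d (a s)) (fun s => x s - zmodFin d (a s)) = X.trace :=
      Fintype.sum_equiv (Equiv.piCongrRight fun s => (zmodFin d).trans (Equiv.subLeft (x s)))
        _ _ (fun a => rfl)
    rw [htr, hX, mul_zero]
  · obtain ⟨s, hs⟩ := Function.ne_iff.mp hxy
    rw [Finset.sum_comm]
    refine Finset.sum_eq_zero (fun a _ => ?_)
    rw [← Finset.sum_mul]
    have hprod := Fintype.prod_sum (fun (s : Fin t) (b : ZMod d) =>
      star (rootU d ^ ((x s : ℕ) * b.val)) * rootU d ^ ((y s : ℕ) * b.val))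
    rw [← hprod, Finset.prod_eq_zero (Finset.mem_univ s) (sum_phase_eq_zero d hs), zero_mul]

/-- Over an orthogonal array, a function of the entries in `t` distinct rows, taken in any order,
sums over the columns to `λ` times its sum over all `t`-tuples. -/
lemma sum_columns {A : Type*} [Fintype A] {n N t lam : ℕ} (M : Fin n → Fin N → A)
    (hOA : ∀ κ' : Fin t → Fin n, StrictMono κ' → ∀ a : Fin t → A,
      Nat.card {j : Fin N // ∀ i, M (κ' i) j = a i} = lam)
    (κ : Fin t → Fin n) (hκ : Function.Injective κ) (f : (Fin t → A) → ℂ) :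
    ∑ j, f (fun s => M (κ s) j) = lam * ∑ a, f a := by
  have hcard : ∀ a : Fin t → A, Nat.card {j : Fin N // (fun s => M (κ s) j) = a} = lam := by
    intro a
    have hmono : StrictMono (κ ∘ Tuple.sort κ) :=
      (Tuple.monotone_sort κ).strictMono_of_injective (hκ.comp (Tuple.sort κ).injective)
    rw [← hOA _ hmono (a ∘ Tuple.sort κ)]
    refine Nat.card_congr (Equiv.subtypeEquivRight fun j => ?_)
    rw [funext_iff]
    exact ((Tuple.sort κ).forall_congr_right (q := fun s => M (κ s) j = a s)).symm
  rw [← Fintype.sum_fiberwise (fun j s => M (κ s) j), Finset.mul_sum]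
  refine Finset.sum_congr rfl (fun a _ => ?_)
  rw [Finset.sum_congr rfl (fun j _ => congrArg f j.2), Finset.sum_const, Finset.card_univ,
    ← Nat.card_eq_fintype_card, hcard, nsmul_eq_mul]

/-- Switching off `t`-body Hamiltonians with orthogonal arrays (bang-bang controls). -/
theorem decoupling_tbody_with_orthogonal_arrays (d n N t lam : ℕ) [NeZero d] (hd : 1 ≤ d)
    (hlam : 1 ≤ lam)
    (M : Fin n → Fin N → ZMod d × ZMod d)
    (hOA : ∀ κ' : Fin t → Fin n, StrictMono κ' →
      ∀ a : Fin t → ZMod d × ZMod d,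
        Nat.card {j : Fin N // ∀ i, M (κ' i) j = a i} = lam)
    (F : Finset (Fin t → Fin n)) (hF : ∀ κ ∈ F, Function.Injective κ)
    (X : (Fin t → Fin n) → Matrix (Fin t → Fin d) (Fin t → Fin d) ℂ)
    (hX : ∀ κ ∈ F, (X κ).trace = 0)
    (H : Matrix (Fin n → Fin d) (Fin n → Fin d) ℂ)
    (hH : H = ∑ κ ∈ F, embed κ (X κ)) :
    (1 / (N : ℂ)) •
        ∑ j : Fin N,
          (tensorProd (fun k => Umat d (M k j)))ᴴ * H *
            tensorProd (fun k => Umat d (M k j)) = 0 := by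
  suffices h : ∑ j : Fin N, (tensorProd (fun k => Umat d (M k j)))ᴴ * H *
      tensorProd (fun k => Umat d (M k j)) = 0 by rw [h, smul_zero]
  subst hH
  simp only [Finset.mul_sum, Finset.sum_mul]
  rw [Finset.sum_comm]
  refine Finset.sum_eq_zero (fun κ hκ => ?_)
  ext x y
  simp only [Matrix.sum_apply, conj_embed_apply κ (hF κ hκ), Matrix.zero_apply]
  by_cases hxy : ∀ i : Fin n, i ∉ Set.range κ → x i = y i
  · simp only [if_pos hxy]
    exact (sum_columns M hOA κ (hF κ hκ) (twirlEntry (X κ) (x ∘ κ) (y ∘ κ))).trans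
      (by rw [sum_twirlEntry (X κ) (hX κ hκ), mul_zero])
  · simp only [if_neg hxy, Finset.sum_const_zero]
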